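/- If G is a connected cubic simple graph of order n that has a cut vertex, then G has a spanning tree with at most n/6 + 1/3 leaves, i.e. ml(G) ≤ n/6 + 1/3. -/

import Mathlib

open SimpleGraph

/-- Number of leaves (degree-one vertices) of a graph. -/
noncomputable def leafCount {V : Type} (T : SimpleGraph V) : ℕ :=
  Set.ncard {v | (T.neighborSet v).ncard = 1}

/-- The minimum leaf number: the minimum number of leaves of a spanning tree. -/
noncomputable def ml {V : Type} (G : SimpleGraph V) : ℕ :=
  sInf {k | ∃ T : SimpleGraph V, T ≤ G ∧ T.IsTree ∧ leafCount T = k}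

/-- A graph is cubic if every vertex has degree 3. -/
def IsCubic {V : Type} (G : SimpleGraph V) : Prop :=
  ∀ v : V, (G.neighborSet v).ncard = 3

/-!
A cubic graph with a cut vertex `c` has a bridge at `c`: otherwise every neighbour of `c` reaches
another neighbour without passing through `c`, so all three of them stay connected.

Span each side of the bridge by a tree rooted at the end of the bridge, with as few leaves as
possible and, subject to that, with the branchings as far from the root as possible. A leaf of such
a tree is adjacent only to its own ancestors, so it sends two non-tree edges to ancestors, all of
which have one child and receive only one such edge. Optimality also forces each of these ancestors
to come with a second one-child vertex of its own, at least once every kite, a path `x, y, z, l` at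
the bottom of the tree with `l` adjacent to all of it, has been rotated to `x, l, y, z`. So a tree
with `w` leaves has at least `4 * w` one-child vertices, and hence at least `6 * w - 1` vertices.

Joining the two trees over the bridge and rerooting at a leaf yields a spanning tree with at most
`w₁ + w₂` leaves, and `6 * (w₁ + w₂) ≤ n + 2`.
-/
/-- `G` has maximum degree at most three. -/
def Subcubic {V : Type*} (G : SimpleGraph V) : Prop :=
  ∀ v, (G.neighborSet v).encard ≤ 3

theorem Subcubic.eq_or_eq_or_eq {V : Type*} {G : SimpleGraph V} (hG : Subcubic G) {v a b c x : V}
    (ha : G.Adj v a) (hb : G.Adj v b) (hc : G.Adj v c) (hab : a ≠ b) (hac : a ≠ c) (hbc : b ≠ c)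
    (hx : G.Adj v x) : x = a ∨ x = b ∨ x = c := by
  by_contra! hne
  have hsub : {x, a, b, c} ⊆ G.neighborSet v := by
    rintro y (rfl | rfl | rfl | rfl) <;> assumption
  have hcard : ({x, a, b, c} : Set V).encard = 4 := by
    rw [Set.encard_insert_of_notMem (by simp [hne]),
      Set.encard_eq_three.2 ⟨a, b, c, hab, hac, hbc, rfl⟩]
    rfl
  have := hcard ▸ (Set.encard_le_encard hsub).trans (hG v)
  norm_num at this

/-- Rooted trees with labelled vertices in which every vertex has at most two children. Hanging
such a tree `t` below a new vertex `p` yields the planted tree `one p t`. -/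
inductive MotzkinTree (V : Type*) : Type _
  | leaf (v : V) : MotzkinTree V
  | one (v : V) (s : MotzkinTree V) : MotzkinTree V
  | two (v : V) (a b : MotzkinTree V) : MotzkinTree V

namespace MotzkinTree

variable {V : Type*}

/-- The label of the root. -/
def root : MotzkinTree V → V
  | leaf v => v
  | one v _ => v
  | two v _ _ => v

/-- The number of childless vertices. -/
def width : MotzkinTree V → ℕ
  | leaf _ => 1
  | one _ s => s.width
  | two _ a b => a.width + b.width

/-- The number of vertices with exactly one child. -/
def unaryCount : MotzkinTree V → ℕ
  | leaf _ => 0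
  | one _ s => s.unaryCount + 1
  | two _ a b => a.unaryCount + b.unaryCount

theorem width_pos (t : MotzkinTree V) : 0 < t.width := by
  induction t <;> simp only [width] <;> omega

variable [DecidableEq V]

/-- The set of vertices of a tree. -/
def verts : MotzkinTree V → Finset V
  | leaf v => {v}
  | one v s => insert v s.verts
  | two v a b => insert v (a.verts ∪ b.verts)

/-- The set of childless vertices of a tree. -/
def leaves : MotzkinTree V → Finset V
  | leaf v => {v}
  | one _ s => s.leaves
  | two _ a b => a.leaves ∪ b.leaves

/-- The tree is a subgraph of `G`, that is, its labels are distinct and every vertex is adjacent to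
its children. The first two conjuncts for `two v a b` are validity of `one v a` and `one v b`. -/
def Valid (G : SimpleGraph V) : MotzkinTree V → Prop
  | leaf _ => True
  | one v s => G.Adj v s.root ∧ v ∉ s.verts ∧ s.Valid G
  | two v a b => (G.Adj v a.root ∧ v ∉ a.verts ∧ a.Valid G) ∧
      (G.Adj v b.root ∧ v ∉ b.verts ∧ b.Valid G) ∧ Disjoint a.verts b.verts

/-- `t` is a tree in `G` with root `r` and vertex set `C`. -/
structure Spans (G : SimpleGraph V) (r : V) (C : Finset V) (t : MotzkinTree V) : Prop where
  valid : t.Valid G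
  root_eq : t.root = r
  verts_eq : t.verts = C

variable {G : SimpleGraph V} {p v r x y l : V} {C D : Finset V} {t s a b : MotzkinTree V}

theorem root_mem_verts (t : MotzkinTree V) : t.root ∈ t.verts := by
  cases t <;> simp [root, verts]

theorem leaves_subset_verts (t : MotzkinTree V) : t.leaves ⊆ t.verts := by
  induction t <;> grind [leaves, verts]

theorem leaves_nonempty (t : MotzkinTree V) : t.leaves.Nonempty := by
  induction t with
  | leaf v => exact Finset.singleton_nonempty v
  | one _ _ ih => exact ih
  | two _ _ _ iha _ => exact iha.mono Finset.subset_union_left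

theorem Valid.spans (ht : t.Valid G) : t.Spans G t.root t.verts :=
  ⟨ht, rfl, rfl⟩

theorem spans_leaf (v : V) : (leaf v).Spans G v {v} :=
  ⟨trivial, rfl, rfl⟩

theorem Spans.valid_one (hs : s.Spans G t.root t.verts) (ht : (one p t).Valid G) :
    (one p s).Valid G :=
  ⟨hs.root_eq.symm ▸ ht.1, hs.verts_eq.symm ▸ ht.2.1, hs.valid⟩

theorem Spans.one (hs : s.Spans G r C) (hr : G.Adj v r) (hv : v ∉ C) :
    (one v s).Spans G v (insert v C) := by
  obtain ⟨hs, rfl, rfl⟩ := hs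
  exact ⟨⟨hr, hv, hs⟩, rfl, rfl⟩

theorem Spans.two {r' : V} (ha : a.Spans G r C) (hb : b.Spans G r' D) (hr : G.Adj v r)
    (hr' : G.Adj v r') (hvC : v ∉ C) (hvD : v ∉ D) (hCD : Disjoint C D) :
    (two v a b).Spans G v (insert v (C ∪ D)) := by
  obtain ⟨ha, rfl, rfl⟩ := ha
  obtain ⟨hb, rfl, rfl⟩ := hb
  exact ⟨⟨⟨hr, hvC, ha⟩, ⟨hr', hvD, hb⟩, hCD⟩, rfl, rfl⟩

theorem Valid.swap (h : (two v a b).Valid G) : (two v b a).Valid G :=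
  ⟨h.2.1, h.1, h.2.2.symm⟩

theorem verts_two_swap (v : V) (a b : MotzkinTree V) : (two v b a).verts = (two v a b).verts := by
  simp only [verts, Finset.union_comm]

theorem Valid.one_swap (h : (one p (two v a b)).Valid G) : (one p (two v b a)).Valid G :=
  ⟨h.1, verts_two_swap v a b ▸ h.2.1, h.2.2.swap⟩

theorem Valid.card_verts_two (h : (two v a b).Valid G) :
    (two v a b).verts.card = a.verts.card + b.verts.card + 1 := by
  obtain ⟨⟨-, hva, -⟩, ⟨-, hvb, -⟩, hab⟩ := h
  rw [verts, Finset.card_insert_of_notMem (by simp [hva, hvb]), Finset.card_union_of_disjoint hab]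

theorem Valid.card_leaves (ht : t.Valid G) : t.leaves.card = t.width := by
  induction t with
  | leaf v => rfl
  | one v s ih => exact ih ht.2.2
  | two v a b iha ihb =>
    obtain ⟨⟨-, -, ha⟩, ⟨-, -, hb⟩, hab⟩ := ht
    rw [leaves, width, ← iha ha, ← ihb hb, Finset.card_union_of_disjoint
      (Finset.disjoint_of_subset_left a.leaves_subset_verts
        (Finset.disjoint_of_subset_right b.leaves_subset_verts hab))]

theorem Valid.card_verts_add_one (ht : t.Valid G) :
    t.verts.card + 1 = 2 * t.width + t.unaryCount := by
  induction t with
  | leaf v => rfl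
  | one v s ih =>
    have := ih ht.2.2
    rw [verts, Finset.card_insert_of_notMem ht.2.1]
    simp only [width, unaryCount]
    omega
  | two v a b iha ihb =>
    have := iha ht.1.2.2
    have := ihb ht.2.1.2.2
    rw [ht.card_verts_two]
    simp only [width, unaryCount]
    omega

theorem Valid.eq_leaf_of_root_mem_leaves (ht : t.Valid G) (hr : t.root ∈ t.leaves) :
    t = leaf t.root := by
  cases t with
  | leaf v => rfl
  | one v s => exact absurd (s.leaves_subset_verts hr) ht.2.1
  | two v a b =>
    rcases Finset.mem_union.1 hr with h | h
    · exact absurd (a.leaves_subset_verts h) ht.1.2.1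
    · exact absurd (b.leaves_subset_verts h) ht.2.1.2.1

/-! ### Surgery -/

theorem Valid.eq_root_of_adj (hG : Subcubic G) (ht : (one p (two v a b)).Valid G)
    (hvx : G.Adj v x) (hxp : x ≠ p) : x = a.root ∨ x = b.root := by
  obtain ⟨hpv, hp, hva, hvb, hab⟩ := ht
  have ha := a.root_mem_verts
  have hb := b.root_mem_verts
  rw [Finset.disjoint_left] at hab
  have := hG.eq_or_eq_or_eq hpv.symm hva.1 hvb.1 (by grind [verts]) (by grind [verts])
    (by grind) hvx
  tauto

theorem Valid.not_adj_of_ne_root (hG : Subcubic G) (ht : (one p (two v a b)).Valid G)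
    (hx : x ∈ a.verts) (hxa : x ≠ a.root) : ¬ G.Adj v x := by
  intro hvx
  have hxp : x ≠ p := by
    rintro rfl
    exact ht.2.1 (Finset.mem_insert_of_mem (Finset.mem_union_left _ hx))
  rcases ht.eq_root_of_adj hG hvx hxp with h | rfl
  · exact hxa h
  · exact Finset.disjoint_left.1 ht.2.2.2.2 hx b.root_mem_verts

theorem exists_attach (hG : Subcubic G) (ht : (one p t).Valid G) (hs : s.Valid G)
    (hd : Disjoint (one p t).verts s.verts) (hx : x ∈ t.verts) (hxs : G.Adj x s.root) :
    ∃ t' : MotzkinTree V, t'.Spans G t.root (t.verts ∪ s.verts) ∧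
      t'.width ≤ t.width + s.width := by
  induction t generalizing p with
  | leaf v =>
    obtain rfl : x = v := by simpa [verts] using hx
    simp only [verts, Finset.disjoint_insert_left, Finset.disjoint_singleton_left] at hd
    exact ⟨one x s, hs.spans.one hxs hd.2, by simp [width]⟩
  | one v t ih =>
    obtain ⟨-, -, hv⟩ := ht
    simp only [verts, Finset.disjoint_insert_left] at hd ih
    obtain ⟨-, hvs, hd⟩ := hd
    rcases Finset.mem_insert.1 hx with rfl | hx
    · refine ⟨two x t s, ?_, by simp [width]⟩
      simpa [root, verts] using hv.2.2.spans.two hs.spans hv.1 hxs hv.2.1 hvs hd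
    · obtain ⟨t', ht', hw⟩ := ih hv ⟨hvs, hd⟩ hx
      refine ⟨one v t', ?_, by simpa [width] using hw⟩
      simpa [root, verts] using ht'.one hv.1 (by simp [hv.2.1, hvs])
  | two v a b iha ihb =>
    simp only [verts, Finset.disjoint_insert_left, Finset.disjoint_union_left] at hd iha ihb
    obtain ⟨hps, hvs, has, hbs⟩ := hd
    have hxv : x ≠ v := by
      rintro rfl
      rcases ht.eq_root_of_adj hG hxs (ne_of_mem_of_not_mem s.root_mem_verts hps) with h | h
      · exact Finset.disjoint_left.1 has a.root_mem_verts (h ▸ s.root_mem_verts)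
      · exact Finset.disjoint_left.1 hbs b.root_mem_verts (h ▸ s.root_mem_verts)
    obtain ⟨-, -, hva, hvb, hab⟩ := ht
    simp only [verts, Finset.mem_insert, hxv, false_or, Finset.mem_union] at hx
    rcases hx with hx | hx
    · obtain ⟨a', ha', hw⟩ := iha hva ⟨hvs, has⟩ hx
      refine ⟨two v a' b, ?_, by simp only [width]; omega⟩
      have := ha'.two hvb.2.2.spans hva.1 hvb.1 (by simp [hva.2.1, hvs]) hvb.2.1
        (by simp [hab, hbs.symm])
      simpa [root, verts, Finset.union_comm, Finset.union_left_comm] using this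
    · obtain ⟨b', hb', hw⟩ := ihb hvb ⟨hvs, hbs⟩ hx
      refine ⟨two v a b', ?_, by simp only [width]; omega⟩
      have := hva.2.2.spans.two hb' hva.1 hvb.1 hva.2.1 (by simp [hvb.2.1, hvs])
        (by simp [hab, has])
      simpa [root, verts] using this

theorem exists_reroot_join (ht : t.Valid G) (hs : s.Valid G) (hd : Disjoint t.verts s.verts)
    (hts : G.Adj t.root s.root) (hl : l ∈ t.leaves) :
    ∃ t' : MotzkinTree V, (one l t').Spans G l (t.verts ∪ s.verts) ∧
      (one l t').width + 1 = t.width + s.width := by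
  induction t generalizing s with
  | leaf v =>
    obtain rfl : l = v := by simpa [leaves] using hl
    simp only [verts, Finset.disjoint_singleton_left] at hd
    exact ⟨s, hs.spans.one hts hd, by simp only [width]; omega⟩
  | one v t ih =>
    simp only [verts, Finset.disjoint_insert_left] at hd
    obtain ⟨t', ht', hw⟩ := ih ht.2.2 (s := one v s) ⟨hts, hd.1, hs⟩
      (by simp [verts, ht.2.1, hd.2]) ht.1.symm hl
    exact ⟨t', by simpa [verts] using ht', by simpa [width] using hw⟩
  | two v a b iha ihb =>
    have ⟨⟨hva, hvna, ha⟩, ⟨hvb, hvnb, hb⟩, hab⟩ := ht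
    simp only [verts, Finset.disjoint_insert_left, Finset.disjoint_union_left] at hd
    obtain ⟨hvs, has, hbs⟩ := hd
    rcases Finset.mem_union.1 hl with hl | hl
    · obtain ⟨t', ht', hw⟩ := iha ha (s := two v b s) ⟨⟨hvb, hvnb, hb⟩, ⟨hts, hvs, hs⟩, hbs⟩
        (by simp [verts, hvna, hab, has]) hva.symm hl
      exact ⟨t', by simpa [verts, Finset.union_assoc] using ht', by simp only [width] at *; omega⟩
    · obtain ⟨t', ht', hw⟩ := ihb hb (s := two v a s) ⟨⟨hva, hvna, ha⟩, ⟨hts, hvs, hs⟩, has⟩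
        (by simp [verts, hvnb, hab.symm, hbs]) hvb.symm hl
      exact ⟨t', by simpa [verts, Finset.union_left_comm, Finset.union_assoc] using ht',
        by simp only [width] at *; omega⟩

theorem exists_reroot_two (ht : (two v a b).Valid G) (hl : l ∈ (two v a b).leaves) :
    ∃ t' : MotzkinTree V, t'.Spans G l (two v a b).verts ∧ t'.width + 1 = (two v a b).width := by
  wlog hla : l ∈ a.leaves generalizing a b
  · obtain ⟨t', ht', hw⟩ := this ht.swap (by simpa [leaves, or_comm] using hl)
      ((Finset.mem_union.1 hl).resolve_left hla)
    exact ⟨t', verts_two_swap v a b ▸ ht', by simp only [width] at *; omega⟩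
  · obtain ⟨t', ht', hw⟩ := exists_reroot_join ht.1.2.2 (s := one v b) ht.2.1
      (by simp [verts, ht.1.2.1, ht.2.2]) ht.1.1.symm hla
    exact ⟨one l t', by simpa [verts] using ht', hw⟩

theorem exists_reroot (ht : t.Valid G) (hl : l ∈ t.leaves) :
    ∃ t' : MotzkinTree V, t'.Spans G l t.verts ∧ t'.width ≤ t.width := by
  cases t with
  | leaf v =>
    obtain rfl : l = v := by simpa [leaves] using hl
    exact ⟨leaf l, spans_leaf l, le_rfl⟩
  | one v t =>
    obtain ⟨t', ht', hw⟩ := exists_reroot_join ht.2.2 (s := leaf v) trivial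
      (by simp [verts, ht.2.1]) ht.1.symm hl
    exact ⟨one l t', by simpa [verts] using ht', by simp only [width] at *; omega⟩
  | two v a b =>
    obtain ⟨t', ht', hw⟩ := exists_reroot_two ht hl
    exact ⟨t', ht', by omega⟩

theorem exists_split {l' : V} (ht : t.Valid G) (hl : l ∈ t.leaves) (hl' : l' ∈ t.leaves)
    (hne : l ≠ l') :
    ∃ (A B : MotzkinTree V) (C D : Finset V), A.Spans G t.root C ∧ B.Spans G l' D ∧
      Disjoint C D ∧ C ∪ D = t.verts ∧ l ∈ A.leaves ∧ A.width + B.width ≤ t.width := by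
  induction t with
  | leaf v => simp_all [leaves]
  | one v t ih =>
    obtain ⟨A, B, C, D, hA, hB, hd, hCD, hlA, hw⟩ := ih ht.2.2 hl hl'
    have hv : v ∉ C ∧ v ∉ D := by simpa [← hCD] using ht.2.1
    exact ⟨one v A, B, insert v C, D, hA.one ht.1 hv.1, hB, by simp [hv.2, hd],
      by simp [verts, hCD], hlA, hw⟩
  | two v a b iha ihb =>
    wlog hla : l ∈ a.leaves generalizing a b
    · obtain ⟨A, B, C, D, hA, hB, hd, hCD, hlA, hw⟩ := this b a ihb iha ht.swap
        (by simpa [leaves, or_comm] using hl) (by simpa [leaves, or_comm] using hl')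
        ((Finset.mem_union.1 hl).resolve_left hla)
      exact ⟨A, B, C, D, hA, hB, hd, hCD.trans (verts_two_swap v a b), hlA,
        by simp only [width] at *; omega⟩
    obtain ⟨⟨hva, hvna, ha⟩, ⟨hvb, hvnb, hb⟩, hab⟩ := ht
    rcases Finset.mem_union.1 hl' with hl' | hl'
    · obtain ⟨A, B, C, D, hA, hB, hd, hCD, hlA, hw⟩ := iha ha hla hl'
      have hv : v ∉ C ∧ v ∉ D := by simpa [← hCD] using hvna
      have hb' : Disjoint C b.verts ∧ Disjoint D b.verts := by simpa [← hCD] using hab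
      refine ⟨two v A b, B, insert v (C ∪ b.verts), D,
        hA.two hb.spans hva hvb hv.1 hvnb hb'.1, hB, by simp [hv.2, hd, hb'.2.symm], ?_, ?_, ?_⟩
      · simp only [verts, ← hCD]; grind
      · exact Finset.mem_union_left _ hlA
      · simp only [width]; omega
    · obtain ⟨B, hB, hw⟩ := exists_reroot hb hl'
      exact ⟨one v a, B, insert v a.verts, b.verts, ha.spans.one hva hvna, hB,
        by simp [hvnb, hab], by simp [verts], hla, by simp only [width]; omega⟩

/-! ### Optimal trees -/

/-- The total weight of the two-child vertices, where the root of a subtree on `n` vertices counts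
`2 ^ n`. Exponential weights make one branching outweigh all branchings below it, so that a small
weight means that branchings are far from the root. -/
def branchWeight : MotzkinTree V → ℕ
  | leaf _ => 0
  | one _ s => s.branchWeight
  | two v a b => a.branchWeight + b.branchWeight + 2 ^ (two v a b).verts.card

theorem Valid.branchWeight_lt (ht : t.Valid G) : t.branchWeight < 2 ^ (t.verts.card + 1) := by
  induction t with
  | leaf v => simp [branchWeight]
  | one v s ih =>
    rw [verts, Finset.card_insert_of_notMem ht.2.1]
    exact (ih ht.2.2).trans (Nat.pow_lt_pow_right one_lt_two (Nat.lt_succ_self _))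
  | two v a b iha ihb =>
    have ha := Finset.card_pos.2 ⟨_, a.root_mem_verts⟩
    have hb := Finset.card_pos.2 ⟨_, b.root_mem_verts⟩
    have hwa := (iha ht.1.2.2).trans_le (Nat.pow_le_pow_right two_pos
      (by omega : a.verts.card + 1 ≤ a.verts.card + b.verts.card))
    have hwb := (ihb ht.2.1.2.2).trans_le (Nat.pow_le_pow_right two_pos
      (by omega : b.verts.card + 1 ≤ a.verts.card + b.verts.card))
    rw [branchWeight, ht.card_verts_two]
    omega

theorem erase_verts_two (hv : v ≠ l) (hb : l ∉ b.verts) :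
    (two v a b).verts.erase l = insert v (a.verts.erase l ∪ b.verts) := by
  rw [verts, Finset.erase_insert_of_ne hv, Finset.erase_union_distrib,
    Finset.erase_eq_of_notMem hb]

theorem exists_delete_leaf (ht : t.Valid G) (hl : l ∈ t.leaves) (hlr : l ≠ t.root) :
    ∃ t' : MotzkinTree V, t'.Spans G t.root (t.verts.erase l) ∧ t'.width ≤ t.width ∧
      t'.branchWeight ≤ t.branchWeight ∧ (1 < t.width → t'.branchWeight < t.branchWeight) := by
  induction t with
  | leaf v => simp_all [leaves, root]
  | one v s ih =>
    obtain ⟨hv, hvs, hs⟩ := ht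
    by_cases hls : l = s.root
    · subst hls
      obtain ⟨m, rfl⟩ : ∃ m, s = leaf m := ⟨_, hs.eq_leaf_of_root_mem_leaves hl⟩
      have hverts : (one v (leaf m)).verts.erase m = {v} := by grind [verts]
      exact ⟨leaf v, hverts ▸ spans_leaf v, le_rfl, le_rfl, fun h ↦ absurd h (lt_irrefl 1)⟩
    · obtain ⟨s', hs', hw, hb, hb'⟩ := ih hs hl hls
      refine ⟨one v s', ?_, hw, hb, hb'⟩
      rw [verts, Finset.erase_insert_of_ne (show v ≠ l from Ne.symm hlr)]
      exact hs'.one hv fun h ↦ hvs (Finset.mem_of_mem_erase h)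
  | two v a b iha ihb =>
    wlog hla : l ∈ a.leaves generalizing a b
    · obtain ⟨t', ht', hw, hb, hb'⟩ := this b a ihb iha ht.swap
        (by simpa [leaves, or_comm] using hl) hlr ((Finset.mem_union.1 hl).resolve_left hla)
      refine ⟨t', verts_two_swap v a b ▸ ht', ?_⟩
      simp only [width, branchWeight, verts_two_swap v a b] at *
      omega
    obtain ⟨⟨hva, hvna, ha⟩, ⟨hvb, hvnb, hb⟩, hab⟩ := ht
    have hlb : l ∉ b.verts := Finset.disjoint_left.1 hab (a.leaves_subset_verts hla)
    have herase := erase_verts_two (v := v) (a := a) (Ne.symm hlr) hlb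
    have hpow : 0 < 2 ^ (two v a b).verts.card := by positivity
    by_cases hlr : l = a.root
    · subst hlr
      have hverts : a.verts.erase a.root = ∅ := by
        rw [ha.eq_leaf_of_root_mem_leaves hla]
        exact Finset.erase_singleton _
      rw [herase, hverts, Finset.empty_union]
      refine ⟨one v b, hb.spans.one hvb hvnb, by simp [width], ?_⟩
      simp only [branchWeight]
      omega
    · obtain ⟨a', ha', hw, hbw, -⟩ := iha ha hla hlr
      have h := ha'.two hb.spans hva hvb (by simp [hvna]) hvnb
        (Finset.disjoint_of_subset_left (Finset.erase_subset _ _) hab)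
      have hlt : 2 ^ (two v a' b).verts.card < 2 ^ (two v a b).verts.card := by
        rw [h.verts_eq, ← herase]
        exact Nat.pow_lt_pow_right one_lt_two
          (Finset.card_erase_lt_of_mem ((two v a b).leaves_subset_verts hl))
      refine ⟨two v a' b, herase ▸ h, ?_⟩
      simp only [branchWeight, width]
      omega

/-- The quantity that optimal trees minimize: width first, then branching weight. -/
def cost (t : MotzkinTree V) : ℕ ×ₗ ℕ :=
  toLex (t.width, t.branchWeight)

/-- `t` has minimal cost among the trees of `G` with the same root and the same vertices. -/
def Best (G : SimpleGraph V) (t : MotzkinTree V) : Prop :=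
  ∀ t' : MotzkinTree V, t'.Spans G t.root t.verts → t.cost ≤ t'.cost

theorem cost_le_cost_iff : t.cost ≤ s.cost ↔
    t.width < s.width ∨ t.width = s.width ∧ t.branchWeight ≤ s.branchWeight :=
  Prod.Lex.toLex_le_toLex

theorem Best.width_le (h : t.Best G) (hs : s.Spans G t.root t.verts) : t.width ≤ s.width := by
  have := cost_le_cost_iff.1 (h s hs)
  omega

theorem Best.of_one (ht : (one v t).Valid G) (h : (one v t).Best G) : t.Best G := by
  intro s hs
  have := cost_le_cost_iff.1 (h (one v s) (hs.one ht.1 ht.2.1))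
  exact cost_le_cost_iff.2 this

theorem Best.of_two_left (ht : (two v a b).Valid G) (h : (two v a b).Best G) : a.Best G := by
  intro s hs
  have hvert := hs.two ht.2.1.2.2.spans ht.1.1 ht.2.1.1 ht.1.2.1 ht.2.1.2.1 ht.2.2
  have := cost_le_cost_iff.1 (h _ hvert)
  rw [cost_le_cost_iff]
  have hv : (two v s b).verts = (two v a b).verts := hvert.verts_eq
  simp only [width, branchWeight, hv] at *
  omega

theorem Best.swap (h : (two v a b).Best G) : (two v b a).Best G := by
  intro s hs
  have := cost_le_cost_iff.1 (h s (verts_two_swap v a b ▸ hs))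
  rw [cost_le_cost_iff]
  simp only [width, branchWeight, verts_two_swap v a b] at *
  omega

theorem exists_best (ht : t.Valid G) :
    ∃ t' : MotzkinTree V, t'.Spans G t.root t.verts ∧ t'.Best G := by
  obtain ⟨t', ht', hmin⟩ :=
    exists_minimalFor_of_wellFoundedLT (Spans G t.root t.verts) cost ⟨t, ht.spans⟩
  refine ⟨t', ht', fun s hs ↦ ?_⟩
  rw [ht'.root_eq, ht'.verts_eq] at hs
  exact (le_total _ _).elim id (hmin hs)

theorem Best.width_lt_of_one (h : (two v a b).Best G)
    (hs : (one v s).Spans G v (two v a b).verts) : (two v a b).width < s.width := by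
  have hlt : s.branchWeight < (two v a b).branchWeight := by
    have := hs.valid.2.2.branchWeight_lt
    rw [← Finset.card_insert_of_notMem hs.valid.2.1, ← verts, hs.verts_eq] at this
    exact this.trans_le (Nat.le_add_left _ _)
  rcases cost_le_cost_iff.1 (h _ hs) with hw | ⟨-, hw⟩
  · exact hw
  · exact absurd hw hlt.not_ge

/-- `t` is a path on four vertices whose last vertex is adjacent to all others. Such a path has
only three one-child vertices, two of which are joined to the leaf by edges outside the tree. -/
def IsKite (G : SimpleGraph V) (t : MotzkinTree V) : Prop :=
  ∃ x y z l, t = one x (one y (one z (leaf l))) ∧ G.Adj x l ∧ G.Adj y l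

/-- No vertex and its descendants form a kite. -/
def KiteFree (G : SimpleGraph V) : MotzkinTree V → Prop
  | leaf _ => True
  | one v s => ¬ IsKite G (one v s) ∧ s.KiteFree G
  | two _ a b => a.KiteFree G ∧ b.KiteFree G

/-- A kite with path `x, y, z, l` is replaced by the path `x, l, y, z`. -/
theorem exists_kiteFree_of_isKite (hG : Subcubic G) (ht : (one p t).Valid G) (hk : t.IsKite G) :
    ∃ t' : MotzkinTree V, t'.Spans G t.root t.verts ∧ t'.width = t.width ∧
      t'.branchWeight = t.branchWeight ∧ t'.KiteFree G := by
  obtain ⟨x, y, z, l, rfl, hxl, hyl⟩ := hk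
  simp only [Valid, root, verts, Finset.mem_insert, Finset.mem_singleton, not_or] at ht
  have hxz : ¬ G.Adj x z := fun hxz ↦ by
    have := hG.eq_or_eq_or_eq ht.1.symm ht.2.2.1 hxl (by grind) (by grind) (by grind) hxz
    grind
  refine ⟨one x (one l (one y (leaf z))), ⟨?_, rfl, ?_⟩, rfl, rfl, ?_⟩
  · simp only [Valid, root, verts, Finset.mem_insert, Finset.mem_singleton]
    grind [G.adj_comm]
  · ext w
    simp only [verts, Finset.mem_insert, Finset.mem_singleton]
    tauto
  · simp [KiteFree, IsKite, hxz]

theorem exists_kiteFree (hG : Subcubic G) (ht : (one p t).Valid G) :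
    ∃ t' : MotzkinTree V, t'.Spans G t.root t.verts ∧ t'.width = t.width ∧
      t'.branchWeight = t.branchWeight ∧ t'.KiteFree G := by
  induction t generalizing p with
  | leaf v => exact ⟨leaf v, spans_leaf v, rfl, rfl, trivial⟩
  | one v s ih =>
    obtain ⟨hpv, hp, hv⟩ := ht
    obtain ⟨s', hs', hw, hb, hk⟩ := ih hv
    have h : (one v s').Spans G v (one v s).verts := hs'.one hv.1 hv.2.1
    by_cases hkite : IsKite G (one v s')
    · obtain ⟨t', ht', hw', hb', hk'⟩ :=
        exists_kiteFree_of_isKite hG (h.valid_one (t := one v s) ⟨hpv, hp, hv⟩) hkite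
      rw [h.verts_eq] at ht'
      exact ⟨t', ht', hw'.trans hw, hb'.trans hb, hk'⟩
    · exact ⟨one v s', h, hw, hb, hkite, hk⟩
  | two v a b iha ihb =>
    obtain ⟨-, -, hva, hvb, hab⟩ := ht
    obtain ⟨a', ha', hwa, hba, hka⟩ := iha hva
    obtain ⟨b', hb', hwb, hbb, hkb⟩ := ihb hvb
    have h : (two v a' b').Spans G v (two v a b).verts :=
      ha'.two hb' hva.1 hvb.1 hva.2.1 hvb.2.1 hab
    refine ⟨two v a' b', h, ?_, ?_, hka, hkb⟩ <;> simp only [width, branchWeight, h.verts_eq, *]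

theorem exists_best_kiteFree (hG : Subcubic G) (ht : (one p t).Valid G) :
    ∃ t' : MotzkinTree V, t'.Spans G t.root t.verts ∧ t'.Best G ∧ t'.KiteFree G := by
  obtain ⟨s, hs, hbest⟩ := exists_best ht.2.2
  obtain ⟨t', ht', hw, hb, hk⟩ := exists_kiteFree hG (hs.valid_one ht)
  refine ⟨t', hs.root_eq ▸ hs.verts_eq ▸ ht', fun u hu ↦ ?_, hk⟩
  have : t'.cost = s.cost := by rw [cost, cost, hw, hb]
  exact this ▸ hbest u (ht'.root_eq ▸ ht'.verts_eq ▸ hu)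

/-! ### Edges at the leaves of an optimal tree -/

theorem Best.not_adj_of_siblings (hG : Subcubic G) (ht : (two v a b).Valid G)
    (h : (two v a b).Best G) (hl : l ∈ a.leaves) (hx : x ∈ b.verts) : ¬ G.Adj x l := by
  intro hxl
  obtain ⟨⟨-, hvna, ha⟩, hvb, hab⟩ := ht
  obtain ⟨a', ha', hwa⟩ := exists_reroot ha hl
  obtain ⟨b', hb', hwb⟩ := exists_attach hG hvb ha'.valid
    (by simp [ha'.verts_eq, verts, hvna, hab.symm]) hx (ha'.root_eq ▸ hxl)
  have hwidth := h.width_lt_of_one (s := b') <| by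
    have hv : v ∉ b.verts ∪ a'.verts := by simp [ha'.verts_eq, hvna, hvb.2.1]
    simpa [verts, ha'.verts_eq, Finset.union_comm] using hb'.one hvb.1 hv
  simp only [width] at hwidth
  omega

theorem Best.not_adj_of_two (ht : (one x (two y a b)).Valid G)
    (h : (one x (two y a b)).Best G) (hl : l ∈ (two y a b).leaves) : ¬ G.Adj x l := by
  intro hxl
  obtain ⟨t', ht', hw⟩ := exists_reroot_two ht.2.2 hl
  have := h.width_le (ht'.one hxl ht.2.1)
  simp only [width] at *
  omega

theorem Best.eq_of_adj_of_adj {l' : V} (ht : (one x (one y s)).Valid G)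
    (h : (one x (one y s)).Best G) (hl : l ∈ s.leaves) (hl' : l' ∈ s.leaves)
    (hxl : G.Adj x l) (hyl : G.Adj y l') : l = l' := by
  by_contra hne
  obtain ⟨-, hx, hys, hy, hs⟩ := ht
  obtain ⟨A, B, C, D, hA, hB, hCD, hs', hlA, hw⟩ := exists_split hs hl hl' hne
  have hyCD : y ∉ C ∧ y ∉ D := by simpa [← hs'] using hy
  have htwo : (two y A B).Spans G y (one y s).verts := by
    rw [verts, ← hs']
    exact hA.two hB hys hyl hyCD.1 hyCD.2 hCD
  obtain ⟨t', ht', hw'⟩ := exists_reroot_two htwo.valid (Finset.mem_union_left _ hlA)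
  rw [htwo.verts_eq] at ht'
  have := h.width_le (ht'.one hxl hx)
  simp only [width] at *
  omega

theorem Best.width_eq_one (ht : (one x (one y s)).Valid G) (h : (one x (one y s)).Best G)
    (hl : l ∈ s.leaves) (hlr : l ≠ s.root) (hxl : G.Adj x l) (hyl : G.Adj y l) : s.width = 1 := by
  by_contra hne
  obtain ⟨-, hx, hys, hy, hs⟩ := ht
  obtain ⟨s', hs', hw, -, hb⟩ := exists_delete_leaf hs hl hlr
  have hls := s.leaves_subset_verts hl
  have hspan : (one x (one l (one y s'))).Spans G x (one x (one y s)).verts := by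
    have := ((hs'.one hys (by simp [hy])).one hyl.symm (by grind)).one hxl (by grind [verts])
    rwa [Finset.insert_comm l y, Finset.insert_erase hls] at this
  have hcost := cost_le_cost_iff.1 (h _ hspan)
  have := s.width_pos
  simp only [width, branchWeight] at hcost
  omega

/-! ### Counting back edges -/

open Classical in
/-- The one-child vertices that are joined to a leaf below them by an edge outside the tree, that
is, the upper ends of the back edges at the leaves. -/
noncomputable def backEnds (G : SimpleGraph V) : MotzkinTree V → Finset V
  | leaf _ => ∅
  | one v s =>
    if ∃ l ∈ s.leaves, l ≠ s.root ∧ G.Adj v l then insert v (s.backEnds G) else s.backEnds G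
  | two _ a b => a.backEnds G ∪ b.backEnds G

theorem mem_backEnds_one : x ∈ (one v s).backEnds G ↔
    (x = v ∧ ∃ l ∈ s.leaves, l ≠ s.root ∧ G.Adj v l) ∨ x ∈ s.backEnds G := by
  rw [backEnds]
  split_ifs with h <;> simp [h]

theorem backEnds_subset_verts (t : MotzkinTree V) : t.backEnds G ⊆ t.verts := by
  induction t with
  | leaf v => exact Finset.empty_subset _
  | one v s ih =>
    intro x hx
    rcases mem_backEnds_one.1 hx with ⟨rfl, -⟩ | hx
    · exact Finset.mem_insert_self _ _
    · exact Finset.mem_insert_of_mem (ih hx)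
  | two v a b iha ihb =>
    exact (Finset.union_subset_union iha ihb).trans (Finset.subset_insert _ _)

theorem exists_leaf_adj_of_mem_backEnds (hx : x ∈ t.backEnds G) : ∃ l ∈ t.leaves, G.Adj x l := by
  induction t with
  | leaf v => simp [backEnds] at hx
  | one v s ih =>
    rcases mem_backEnds_one.1 hx with ⟨rfl, l, hl, -, hxl⟩ | hx
    · exact ⟨l, hl, hxl⟩
    · exact ih hx
  | two v a b iha ihb => grind [backEnds, leaves]

theorem Best.exists_parent (hG : Subcubic G) (ht : (one p t).Valid G) (h : t.Best G)
    (hl : l ∈ t.leaves) (hlr : l ≠ t.root) :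
    ∃ q ∈ t.verts, q ∉ t.backEnds G ∧ G.Adj q l ∧
      ∀ x ∈ t.verts, G.Adj x l → x = q ∨ x ∈ t.backEnds G := by
  induction t generalizing p with
  | leaf v => simp_all [leaves, root]
  | one v s ih =>
    obtain ⟨-, -, hv⟩ := ht
    have hsub := s.backEnds_subset_verts (G := G)
    by_cases hls : l = s.root
    · subst hls
      obtain ⟨m, rfl⟩ : ∃ m, s = leaf m := ⟨_, hv.2.2.eq_leaf_of_root_mem_leaves hl⟩
      refine ⟨v, Finset.mem_insert_self _ _, by simp [leaves, root, backEnds], hv.1,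
        fun x hx hxl ↦ .inl ?_⟩
      exact (Finset.mem_insert.1 hx).resolve_right fun h ↦ hxl.ne (Finset.mem_singleton.1 h)
    · obtain ⟨q, hq, hqs, hql, hall⟩ := ih hv (h.of_one hv) hl hls
      refine ⟨q, Finset.mem_insert_of_mem hq, ?_, hql, fun x hx hxl ↦ ?_⟩
      · rw [mem_backEnds_one]
        rintro (⟨rfl, -⟩ | hq')
        exacts [hv.2.1 hq, hqs hq']
      · rw [mem_backEnds_one]
        rcases Finset.mem_insert.1 hx with rfl | hx
        · exact .inr (.inl ⟨rfl, l, hl, hls, hxl⟩)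
        · exact (hall x hx hxl).imp_right .inr
  | two v a b iha ihb =>
    wlog hla : l ∈ a.leaves generalizing a b
    · have := this b a ihb iha ht.one_swap h.swap (by simpa [leaves, or_comm] using hl) hlr
        ((Finset.mem_union.1 hl).resolve_left hla)
      simpa only [verts_two_swap v a b, backEnds, Finset.union_comm (a.backEnds G)] using this
    have hv := ht.2.2
    have hab := Finset.disjoint_left.1 hv.2.2
    have hlv := a.leaves_subset_verts hla
    have hnb : ∀ x ∈ b.verts, ¬ G.Adj x l := fun x hx ↦ h.not_adj_of_siblings hG hv hla hx
    have hba := a.backEnds_subset_verts (G := G)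
    have hbb := b.backEnds_subset_verts (G := G)
    by_cases hla' : l = a.root
    · have ha : a.verts = {l} := by
        rw [hv.1.2.2.eq_leaf_of_root_mem_leaves (hla' ▸ hla), ← hla', verts]
      refine ⟨v, Finset.mem_insert_self _ _, ?_, hla' ▸ hv.1.1, fun x hx hxl ↦ ?_⟩
      · grind [backEnds, Valid]
      · have := hxl.ne
        grind [verts]
    · obtain ⟨q, hq, hqa, hql, hall⟩ := iha hv.1 (h.of_two_left hv) hla hla'
      have hvl := ht.not_adj_of_ne_root hG hlv hla'
      refine ⟨q, ?_, ?_, hql, fun x hx hxl ↦ ?_⟩ <;> grind [verts, backEnds]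

theorem Best.eq_of_mem_backEnds {l' : V} (hG : Subcubic G) (ht : (one p t).Valid G)
    (h : t.Best G) (hx : x ∈ t.backEnds G) (hl : l ∈ t.leaves) (hl' : l' ∈ t.leaves)
    (hxl : G.Adj x l) (hxl' : G.Adj x l') : l = l' := by
  induction t generalizing p with
  | leaf v => simp [backEnds] at hx
  | one v s ih =>
    obtain ⟨hpv, hp, hv⟩ := ht
    rcases mem_backEnds_one.1 hx with ⟨rfl, m, hm, hms, hxm⟩ | hx
    · have hunique : ∀ k ∈ s.leaves, G.Adj x k → k = m := by
        intro k hk hxk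
        have hks : k ≠ s.root := by
          rintro rfl
          rw [hv.2.2.eq_leaf_of_root_mem_leaves hk] at hm
          exact hms (by simpa [leaves] using hm)
        have hps : ∀ w ∈ s.verts, p ≠ w := by
          rintro w hw rfl
          exact hp (Finset.mem_insert_of_mem hw)
        have := hG.eq_or_eq_or_eq hpv.symm hv.1 hxm (hps _ s.root_mem_verts)
          (hps _ (s.leaves_subset_verts hm)) hms.symm hxk
        have := hps _ (s.leaves_subset_verts hk)
        tauto
      rw [hunique l hl hxl, hunique l' hl' hxl']
    · exact ih hv (h.of_one hv) hx hl hl'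
  | two v a b iha ihb =>
    wlog hxa : x ∈ a.backEnds G generalizing a b
    · exact this b a ihb iha ht.one_swap h.swap (by simpa [backEnds, or_comm] using hx)
        (by simpa [leaves, or_comm] using hl) (by simpa [leaves, or_comm] using hl')
        ((Finset.mem_union.1 hx).resolve_left hxa)
    have hv := ht.2.2
    have hnot : ∀ k ∈ b.leaves, ¬ G.Adj x k := fun k hk ↦
      h.swap.not_adj_of_siblings hG hv.swap hk (a.backEnds_subset_verts hxa)
    have hmem : ∀ k ∈ (two v a b).leaves, G.Adj x k → k ∈ a.leaves := fun k hk hxk ↦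
      (Finset.mem_union.1 hk).resolve_right fun hkb ↦ hnot k hkb hxk
    exact iha hv.1 (h.of_two_left hv) hxa (hmem l hl hxl) (hmem l' hl' hxl')

theorem backEnds_eq_empty_of_width_eq_one (hG : Subcubic G) (ht : (one y s).Valid G)
    (h : s.Best G) (hw : s.width = 1) (hl : l ∈ s.leaves) (hlr : l ≠ s.root)
    (hx : x ∉ (one y s).verts) (hxl : G.Adj x l) (hyl : G.Adj y l) : s.backEnds G = ∅ := by
  obtain ⟨q, hq, hqs, hql, -⟩ := h.exists_parent hG ht hl hlr
  have hleaves : ∀ m ∈ s.leaves, m = l := fun m hm ↦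
    Finset.card_le_one.1 (ht.2.2.card_leaves.trans hw).le m hm l hl
  rw [Finset.eq_empty_iff_forall_notMem]
  intro z hz
  obtain ⟨m, hm, hzm⟩ := exists_leaf_adj_of_mem_backEnds hz
  obtain rfl := hleaves m hm
  have hzv := s.backEnds_subset_verts hz
  obtain ⟨-, hy, -⟩ := ht
  have := hG.eq_or_eq_or_eq hxl.symm hyl.symm hql.symm (by grind [verts]) (by grind [verts])
    (by grind [verts]) hzm.symm
  grind [verts]

theorem four_le_unaryCount (hw : s.width = 1) (hl : l ∈ s.leaves) (hlr : l ≠ s.root)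
    (hxl : G.Adj x l) (hyl : G.Adj y l) (hk : ¬ IsKite G (one x (one y s))) :
    4 ≤ (one x (one y s)).unaryCount := by
  match s with
  | leaf z => simp_all [leaves, root]
  | two z a b =>
    have := a.width_pos
    have := b.width_pos
    simp only [width] at hw
    omega
  | one z (leaf m) =>
    obtain rfl : l = m := by simpa [leaves] using hl
    exact absurd ⟨x, y, z, l, rfl, hxl, hyl⟩ hk
  | one z (two m a b) =>
    have := a.width_pos
    have := b.width_pos
    simp only [width] at hw
    omega
  | one z (one m s) =>
    simp only [unaryCount]
    omega

theorem two_mul_card_backEnds_le (hG : Subcubic G) : ∀ {t : MotzkinTree V} {p : V},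
    (one p t).Valid G → t.Best G → t.KiteFree G → 2 * (t.backEnds G).card ≤ t.unaryCount
  | leaf _, _, _, _, _ => by simp [backEnds]
  | two v a b, _, ht, h, hk => by
    have ha := two_mul_card_backEnds_le hG ht.2.2.1 (h.of_two_left ht.2.2) hk.1
    have hb := two_mul_card_backEnds_le hG ht.2.2.2.1 (h.swap.of_two_left ht.2.2.swap) hk.2
    have := Finset.card_union_le (a.backEnds G) (b.backEnds G)
    simp only [backEnds, unaryCount]
    omega
  | one x (leaf y), _, _, _, _ => by simp [backEnds, leaves, root]
  | one x (two y a b), _, ht, h, hk => by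
    have ih := two_mul_card_backEnds_le hG ht.2.2 (h.of_one ht.2.2) hk.2
    have hx : ¬ ∃ l ∈ (two y a b).leaves, l ≠ (two y a b).root ∧ G.Adj x l :=
      fun ⟨l, hl, _, hxl⟩ ↦ h.not_adj_of_two ht.2.2 hl hxl
    rw [backEnds, if_neg hx, unaryCount]
    omega
  | one x (one y s), p, ht, h, hk => by
    have ht := ht.2.2
    have hy := h.of_one ht
    have hs := hy.of_one ht.2.2
    have ihy := two_mul_card_backEnds_le hG ht hy hk.2
    have ihs := two_mul_card_backEnds_le hG ht.2.2 hs hk.2.2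
    by_cases hxl : ∃ l ∈ (one y s).leaves, l ≠ (one y s).root ∧ G.Adj x l
    · by_cases hyl : ∃ l ∈ s.leaves, l ≠ s.root ∧ G.Adj y l
      · obtain ⟨l, hl, hlr, hxl⟩ := hxl
        obtain ⟨m, hm, hms, hym⟩ := hyl
        obtain rfl := h.eq_of_adj_of_adj ht hl hm hxl hym
        have hw := h.width_eq_one ht hl hms hxl hym
        have hempty := backEnds_eq_empty_of_width_eq_one hG ht.2.2 hs hw hl hms ht.2.1 hxl hym
        have hunary := four_le_unaryCount hw hl hms hxl hym hk.1
        rw [backEnds, if_pos ⟨l, hl, hlr, hxl⟩, backEnds, if_pos ⟨l, hl, hms, hym⟩, hempty]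
        exact (Nat.mul_le_mul_left 2 Finset.card_le_two).trans hunary
      · rw [backEnds, if_pos hxl, backEnds, if_neg hyl]
        have := Finset.card_insert_le x (s.backEnds G)
        simp only [unaryCount]
        omega
    · rw [backEnds, if_neg hxl, unaryCount]
      omega

theorem two_mul_width_le_card_backEnds (hG : Subcubic G) (ht : (one p t).Valid G) (h : t.Best G)
    (hdeg : ∀ l ∈ t.leaves, 3 ≤ (t.verts ∩ G.neighborSet l : Set V).ncard) :
    2 * t.width ≤ (t.backEnds G).card := by
  classical
  rw [← ht.2.2.card_leaves, mul_comm, ← mul_one (t.backEnds G).card]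
  refine Finset.card_mul_le_card_mul (fun l x ↦ G.Adj x l) (fun l hl ↦ ?_) fun x hx ↦ ?_
  · have hlr : l ≠ t.root := by
      rintro rfl
      have := hdeg _ hl
      rw [ht.2.2.eq_leaf_of_root_mem_leaves hl] at this
      simp [verts, root] at this
    obtain ⟨q, -, -, -, hall⟩ := h.exists_parent hG ht hl hlr
    have hsub : (t.verts ∩ G.neighborSet l : Set V) ⊆
        (insert q ((t.backEnds G).bipartiteAbove (fun l x ↦ G.Adj x l) l) : Finset V) := by
      rintro x ⟨hx, hlx⟩
      have := hall x hx hlx.symm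
      simp only [Finset.mem_bipartiteAbove, Finset.coe_insert, Set.mem_insert_iff, Finset.mem_coe]
      exact this.imp_right fun h ↦ ⟨h, hlx.symm⟩
    have := (Set.ncard_le_ncard hsub).trans_eq (Set.ncard_coe_finset _)
    have := this.trans (Finset.card_insert_le _ _)
    have := hdeg l hl
    omega
  · rw [Finset.card_le_one]
    simp only [Finset.mem_bipartiteBelow]
    exact fun l hl l' hl' ↦ h.eq_of_mem_backEnds hG ht hx hl.1 hl'.1 hl.2 hl'.2

theorem six_mul_width_le (hG : Subcubic G) (ht : (one p t).Valid G) (h : t.Best G)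
    (hk : t.KiteFree G) (hdeg : ∀ l ∈ t.leaves, 3 ≤ (t.verts ∩ G.neighborSet l : Set V).ncard) :
    6 * t.width ≤ t.verts.card + 1 := by
  have := two_mul_width_le_card_backEnds hG ht h hdeg
  have := two_mul_card_backEnds_le hG ht h hk
  have := ht.2.2.card_verts_add_one
  omega


/-! ### The spanning tree of a rooted tree -/

/-- The edges between the vertices of a tree and their children. -/
def edges : MotzkinTree V → Finset (Sym2 V)
  | leaf _ => ∅
  | one v s => insert s(v, s.root) s.edges
  | two v a b => insert s(v, a.root) a.edges ∪ insert s(v, b.root) b.edges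

/-- A rooted tree as a graph on all of `V`. -/
def graph (t : MotzkinTree V) : SimpleGraph V :=
  fromEdgeSet t.edges

theorem edges_subset_one (v : V) (s : MotzkinTree V) : s.edges ⊆ (one v s).edges :=
  Finset.subset_insert _ _

theorem edges_subset_two_left (v : V) (a b : MotzkinTree V) :
    (one v a).edges ⊆ (two v a b).edges :=
  Finset.subset_union_left

theorem edges_subset_two_right (v : V) (a b : MotzkinTree V) :
    (one v b).edges ⊆ (two v a b).edges :=
  Finset.subset_union_right

theorem mk_root_mem_edges_one (v : V) (s : MotzkinTree V) : s(v, s.root) ∈ (one v s).edges :=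
  Finset.mem_insert_self _ _

theorem Valid.edges_subset (ht : t.Valid G) : (t.edges : Set (Sym2 V)) ⊆ G.edgeSet := by
  induction t with
  | leaf v => simp [edges]
  | one v s ih => simpa [edges, Set.insert_subset_iff] using ⟨ht.1, ih ht.2.2⟩
  | two v a b iha ihb =>
    simpa [edges, Set.insert_subset_iff] using
      ⟨ht.2.1.1, ht.1.1, iha ht.1.2.2, ihb ht.2.1.2.2⟩

theorem Valid.graph_adj (ht : t.Valid G) : t.graph.Adj x y ↔ s(x, y) ∈ t.edges := by
  simpa [graph] using fun h ↦ G.ne_of_adj (ht.edges_subset h)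

theorem Valid.graph_le (ht : t.Valid G) : t.graph ≤ G :=
  fun _ _ h ↦ ht.edges_subset (ht.graph_adj.1 h)

theorem Valid.card_edges_lt (ht : t.Valid G) : t.edges.card < t.verts.card := by
  induction t with
  | leaf v => simp [edges, verts]
  | one v s ih =>
    rw [verts, Finset.card_insert_of_notMem ht.2.1]
    exact (Finset.card_insert_le _ _).trans_lt (Nat.succ_lt_succ (ih ht.2.2))
  | two v a b iha ihb =>
    have := iha ht.1.2.2
    have := ihb ht.2.1.2.2
    have := Finset.card_union_le (insert s(v, a.root) a.edges) (insert s(v, b.root) b.edges)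
    have := Finset.card_insert_le s(v, a.root) a.edges
    have := Finset.card_insert_le s(v, b.root) b.edges
    rw [ht.card_verts_two, edges]
    omega

theorem Valid.reachable_root (ht : t.Valid G) (hx : x ∈ t.verts) : t.graph.Reachable t.root x := by
  have reachable_one {v : V} {s : MotzkinTree V} (hs : (MotzkinTree.one v s).Valid G)
      (h : s.graph.Reachable s.root x) : (MotzkinTree.one v s).graph.Reachable v x :=
    (hs.graph_adj.2 (mk_root_mem_edges_one v s)).reachable.trans
      (h.mono (fromEdgeSet_mono (edges_subset_one v s)))
  induction t with
  | leaf v => rw [Finset.mem_singleton.1 hx]; rfl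
  | one v s ih =>
    rcases Finset.mem_insert.1 hx with rfl | hx
    · rfl
    · exact reachable_one ht (ih ht.2.2 hx)
  | two v a b iha ihb =>
    rcases Finset.mem_insert.1 hx with rfl | hx
    · rfl
    rcases Finset.mem_union.1 hx with hx | hx
    · exact (reachable_one ht.1 (iha ht.1.2.2 hx)).mono
        (fromEdgeSet_mono (edges_subset_two_left v a b))
    · exact (reachable_one ht.2.1 (ihb ht.2.1.2.2 hx)).mono
        (fromEdgeSet_mono (edges_subset_two_right v a b))

theorem Valid.isTree_graph [Fintype V] (ht : t.Valid G) (huniv : t.verts = Finset.univ) :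
    t.graph.IsTree := by
  have hreach : ∀ x, t.graph.Reachable t.root x := fun x ↦ ht.reachable_root (by simp [huniv])
  have hconn : t.graph.Connected := connected_iff_exists_forall_reachable _ |>.2 ⟨_, hreach⟩
  have hedges : t.graph.edgeSet ⊆ t.edges := edgeSet_fromEdgeSet _ ▸ Set.sdiff_subset
  have hcard := (Set.ncard_le_ncard hedges).trans_eq (Set.ncard_coe_finset _)
  rw [isTree_iff_connected_and_card]
  refine ⟨hconn, le_antisymm ?_ hconn.card_vert_le_card_edgeSet_add_one⟩
  rw [Nat.card_coe_set_eq, Nat.card_eq_fintype_card, ← Finset.card_univ, ← huniv]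
  exact hcard.trans_lt ht.card_edges_lt

theorem exists_mem_edges_of_notMem_leaves (ht : (one p t).Valid G) (hx : x ∈ t.verts)
    (hl : x ∉ t.leaves) :
    ∃ y z, y ≠ z ∧ s(x, y) ∈ (one p t).edges ∧ s(x, z) ∈ (one p t).edges := by
  induction t generalizing p with
  | leaf v => exact absurd hx hl
  | one v s ih =>
    have hsub := edges_subset_one p (one v s)
    rcases Finset.mem_insert.1 hx with rfl | hx
    · refine ⟨p, s.root, ?_, Sym2.eq_swap ▸ mk_root_mem_edges_one p (one x s),
        hsub (mk_root_mem_edges_one x s)⟩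
      rintro rfl
      exact ht.2.1 (Finset.mem_insert_of_mem s.root_mem_verts)
    · obtain ⟨y, z, hyz, hy, hz⟩ := ih ht.2.2 hx hl
      exact ⟨y, z, hyz, hsub hy, hsub hz⟩
  | two v a b iha ihb =>
    have hsub := edges_subset_one p (two v a b)
    have hleft := (edges_subset_two_left v a b).trans hsub
    have hright := (edges_subset_two_right v a b).trans hsub
    rw [leaves, Finset.notMem_union] at hl
    rcases Finset.mem_insert.1 hx with rfl | hx
    · refine ⟨p, a.root, ?_, Sym2.eq_swap ▸ mk_root_mem_edges_one p (two x a b),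
        hleft (mk_root_mem_edges_one x a)⟩
      rintro rfl
      exact ht.2.1 (Finset.mem_insert_of_mem (Finset.mem_union_left _ a.root_mem_verts))
    rcases Finset.mem_union.1 hx with hx | hx
    · obtain ⟨y, z, hyz, hy, hz⟩ := iha ht.2.2.1 hx hl.1
      exact ⟨y, z, hyz, hleft hy, hleft hz⟩
    · obtain ⟨y, z, hyz, hy, hz⟩ := ihb ht.2.2.2.1 hx hl.2
      exact ⟨y, z, hyz, hright hy, hright hz⟩

theorem Valid.leafCount_graph_one_le {V : Type} [DecidableEq V] [Fintype V] {G : SimpleGraph V}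
    {p : V} {t : MotzkinTree V} (ht : (one p t).Valid G)
    (huniv : (one p t).verts = Finset.univ) :
    leafCount (one p t).graph ≤ t.width + 1 := by
  have hsub : {v | ((one p t).graph.neighborSet v).ncard = 1} ⊆
      (insert p t.leaves : Finset V) := by
    intro v hv
    by_contra hnot
    simp only [Finset.coe_insert, Set.mem_insert_iff, Finset.mem_coe, not_or] at hnot
    have hvt : v ∈ t.verts :=
      (Finset.mem_insert.1 (huniv ▸ Finset.mem_univ v : v ∈ (one p t).verts)).resolve_left hnot.1
    obtain ⟨y, z, hyz, hy, hz⟩ := exists_mem_edges_of_notMem_leaves ht hvt hnot.2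
    have huniq := Set.ncard_le_one (Set.toFinite _) |>.1 (le_of_eq hv)
    exact hyz (huniq y (ht.graph_adj.2 hy) z (ht.graph_adj.2 hz))
  rw [← ht.2.2.card_leaves]
  exact (Set.ncard_le_ncard hsub).trans
    ((Set.ncard_coe_finset _).trans_le (Finset.card_insert_le _ _))

/-- Rerooting at a leaf makes the old leaf the root of degree one, so that joining the two trees
along an edge between their roots creates no further leaf. -/
theorem ml_le_width_add_width {V : Type} [DecidableEq V] [Fintype V] {G : SimpleGraph V}
    {s t : MotzkinTree V} (hs : s.Valid G) (ht : t.Valid G) (hst : IsCompl s.verts t.verts)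
    (hadj : G.Adj s.root t.root) : ml G ≤ s.width + t.width := by
  obtain ⟨l, hl⟩ := s.leaves_nonempty
  obtain ⟨T, hT, hw⟩ := exists_reroot_join hs ht hst.disjoint hadj hl
  have huniv : (one l T).verts = Finset.univ := hT.verts_eq.trans hst.sup_eq_top
  calc ml G ≤ leafCount (one l T).graph :=
      Nat.sInf_le ⟨_, hT.valid.graph_le, hT.valid.isTree_graph huniv, rfl⟩
    _ ≤ T.width + 1 := hT.valid.leafCount_graph_one_le huniv
    _ = s.width + t.width := hw

end MotzkinTree

/-! ### Bridges -/

theorem IsCubic.subcubic {V : Type} {G : SimpleGraph V} (hG : IsCubic G) : Subcubic G := fun v ↦ by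
  have hfin : (G.neighborSet v).Finite := Set.finite_of_ncard_ne_zero (by simp [hG v])
  rw [← hfin.cast_ncard_eq, hG v]
  rfl

/-- `K` is one of the two parts into which `G` falls when the bridge `s(u, v)` is removed, namely
the one containing `u`. -/
structure IsBridgeSide {V : Type*} (G : SimpleGraph V) (K : Finset V) (u v : V) : Prop where
  mem : u ∈ K
  notMem : v ∉ K
  adj : G.Adj u v
  eq_of_adj : ∀ x ∈ K, ∀ y ∉ K, G.Adj x y → x = u ∧ y = v

section BridgeSide

variable {V : Type*} {G : SimpleGraph V} {K : Finset V} {c u v x : V}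

theorem IsBridgeSide.compl [Fintype V] [DecidableEq V] (h : IsBridgeSide G K u v) :
    IsBridgeSide G Kᶜ v u where
  mem := Finset.mem_compl.2 h.notMem
  notMem := by simpa using h.mem
  adj := h.adj.symm
  eq_of_adj x hx y hy hxy :=
    (h.eq_of_adj y (by simpa using hy) x (Finset.mem_compl.1 hx) hxy.symm).symm

theorem exists_isBridgeSide [Finite V] (huv : G.Adj u v) (hbridge : G.IsBridge s(u, v)) :
    ∃ K, IsBridgeSide G K u v := by
  have := Fintype.ofFinite V
  classical
  refine ⟨Finset.univ.filter ((G.deleteEdges {s(u, v)}).Reachable u), by simp,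
    by simpa using isBridge_iff.1 hbridge, huv, fun x hx y hy hxy ↦ ?_⟩
  simp only [Finset.mem_filter, Finset.mem_univ, true_and] at hx hy
  have hedge : s(x, y) = s(u, v) := by
    by_contra hne
    exact hy (hx.trans (deleteEdges_adj.2 ⟨hxy, hne⟩).reachable)
  rcases Sym2.eq_iff.1 hedge with h | ⟨rfl, rfl⟩
  · exact h
  · exact absurd Reachable.rfl hy

theorem IsBridgeSide.neighborSet_subset (h : IsBridgeSide G K u v) (hx : x ∈ K) (hxu : x ≠ u) :
    G.neighborSet x ⊆ K :=
  fun y hxy ↦ by_contra fun hy ↦ hxu (h.eq_of_adj x hx y hy hxy).1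

theorem IsBridgeSide.ne_singleton (h : IsBridgeSide G K u v)
    (hu : 1 < (G.neighborSet u).ncard) : K ≠ {u} := by
  rintro rfl
  obtain ⟨w, hw, hwv⟩ := Set.exists_ne_of_one_lt_ncard hu v
  exact hwv (h.eq_of_adj u h.mem w (by simpa using hw.ne') hw).2

theorem IsBridgeSide.exists_adj_of_ssubset (h : IsBridgeSide G K u v) (hconn : G.Preconnected)
    {S : Finset V} (hS : S ⊂ K) (hu : u ∈ S) : ∃ x ∈ S, ∃ y ∈ K, y ∉ S ∧ G.Adj x y := by
  obtain ⟨z, hzK, hzS⟩ := Finset.exists_of_ssubset hS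
  obtain ⟨w⟩ := hconn z u
  obtain ⟨d, -, ⟨hyK, hyS⟩, hx⟩ := w.exists_boundary_dart (K \ S) ⟨hzK, hzS⟩ (·.2 hu)
  have hxK : d.snd ∈ K :=
    h.neighborSet_subset hyK (fun hyu ↦ hyS (hyu ▸ hu)) d.adj
  exact ⟨d.snd, by_contra fun hxS ↦ hx ⟨hxK, hxS⟩, d.fst, hyK, hyS, d.adj.symm⟩

open MotzkinTree in
theorem IsBridgeSide.exists_spans [DecidableEq V] (h : IsBridgeSide G K u v) (hG : Subcubic G)
    (hconn : G.Preconnected) : ∃ t : MotzkinTree V, t.Spans G u K := by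
  have hfin : {C | C ⊆ K ∧ ∃ t : MotzkinTree V, t.Spans G u C}.Finite :=
    K.finite_toSet.finite_subsets.preimage Finset.coe_injective.injOn |>.subset
      fun C hC ↦ Finset.coe_subset.2 hC.1
  obtain ⟨C, ⟨hCK, t, ht⟩, hmax⟩ := hfin.exists_maximal
    ⟨{u}, Finset.singleton_subset_iff.2 h.mem, leaf u, spans_leaf u⟩
  rcases hCK.eq_or_ssubset with rfl | hssub
  · exact ⟨t, ht⟩
  have hu : u ∈ C := ht.verts_eq ▸ ht.root_eq ▸ t.root_mem_verts
  obtain ⟨x, hx, y, hyK, hyC, hxy⟩ := h.exists_adj_of_ssubset hconn hssub hu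
  have hvalid : (one v t).Valid G :=
    (ht.one h.adj.symm fun hv ↦ h.notMem (hCK hv)).valid
  obtain ⟨t', ht', -⟩ := exists_attach hG hvalid (spans_leaf y).valid
    (by simpa [verts, ht.verts_eq, hyC] using ne_of_mem_of_not_mem hyK h.notMem)
    (ht.verts_eq ▸ hx) hxy
  rw [ht.root_eq, ht.verts_eq] at ht'
  have hsub : C ∪ {y} ⊆ K := Finset.union_subset hCK (Finset.singleton_subset_iff.2 hyK)
  exact absurd (hmax ⟨hsub, t', ht'⟩ Finset.subset_union_left (by simp)) hyC

theorem exists_adj_reachable_induce_compl (x : ({c}ᶜ : Set V)) (h : G.Reachable x c) :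
    ∃ n : ({c}ᶜ : Set V), G.Adj n c ∧ (G.induce {c}ᶜ).Reachable x n := by
  obtain ⟨x, hx⟩ := x
  obtain ⟨w⟩ : G.Reachable x c := h
  induction w with
  | nil => exact absurd rfl hx
  | @cons x y c hxy w ih =>
    by_cases hy : y = c
    · exact ⟨⟨x, hx⟩, hy ▸ hxy, .rfl⟩
    · obtain ⟨n, hn, hyn⟩ := ih hy
      have hadj : (G.induce {c}ᶜ).Adj ⟨x, hx⟩ ⟨y, hy⟩ := hxy
      exact ⟨n, hn, hadj.reachable.trans hyn⟩

theorem exists_isBridge_of_not_connected_induce_compl (hconn : G.Preconnected)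
    (hdeg : (G.neighborSet c).ncard = 3) (hcut : ¬ (G.induce {c}ᶜ).Connected) :
    ∃ u, G.Adj c u ∧ G.IsBridge s(c, u) := by
  by_contra! hbridge
  have hother (n : ({c}ᶜ : Set V)) (hn : G.Adj c n) :
      ∃ m : ({c}ᶜ : Set V), m ≠ n ∧ G.Adj c m ∧ (G.induce {c}ᶜ).Reachable n m := by
    obtain ⟨m, hm, hnm⟩ := exists_adj_reachable_induce_compl n
      (not_not.1 (isBridge_iff.not.1 (hbridge n hn))).symm
    rw [deleteEdges_adj] at hm
    refine ⟨m, ?_, hm.1.symm, hnm.mono (comap_monotone _ (deleteEdges_le _))⟩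
    rintro rfl
    exact hm.2 Sym2.eq_swap
  obtain ⟨p, q, r, hpq, hpr, hqr, hN⟩ := Set.ncard_eq_three.1 hdeg
  have hadj : ∀ x, G.Adj c x ↔ x = p ∨ x = q ∨ x = r := fun x ↦ by
    simpa using Set.ext_iff.1 hN x
  lift p to ({c}ᶜ : Set V) using ((hadj p).2 (by simp)).ne'
  lift q to ({c}ᶜ : Set V) using ((hadj q).2 (by simp)).ne'
  lift r to ({c}ᶜ : Set V) using ((hadj r).2 (by simp)).ne'
  simp only [hadj, Subtype.coe_inj] at hother
  have hp := hother p (by simp)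
  have hq := hother q (by simp)
  have hr := hother r (by simp)
  have hpqr : (G.induce {c}ᶜ).Reachable p q ∧ (G.induce {c}ᶜ).Reachable p r := by
    have hsymm := fun x y ↦ Reachable.symm (G := G.induce {c}ᶜ) (u := x) (v := y)
    have htrans := fun x y z ↦ Reachable.trans (G := G.induce {c}ᶜ) (u := x) (v := y) (w := z)
    grind
  refine hcut (connected_iff_exists_forall_reachable _ |>.2 ⟨p, fun x ↦ ?_⟩)
  obtain ⟨n, hn, hxn⟩ := exists_adj_reachable_induce_compl x (hconn x c)
  refine .trans ?_ hxn.symm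
  rcases (hadj n).1 hn.symm with h | h | h <;> rw [Subtype.coe_inj.1 h]
  exacts [hpqr.1, hpqr.2]

end BridgeSide

open MotzkinTree in
theorem IsCubic.exists_spans_six_mul_width_le {V : Type} [DecidableEq V] {G : SimpleGraph V}
    {K : Finset V} {u v : V} (hG : IsCubic G) (hconn : G.Preconnected)
    (h : IsBridgeSide G K u v) :
    ∃ t : MotzkinTree V, t.Spans G u K ∧ 6 * t.width ≤ K.card + 1 := by
  obtain ⟨s, hs⟩ := h.exists_spans hG.subcubic hconn
  have hplanted := (hs.one h.adj.symm h.notMem).valid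
  obtain ⟨t, ht, hbest, hkite⟩ := exists_best_kiteFree hG.subcubic hplanted
  have hvalid := ht.valid_one hplanted
  rw [hs.root_eq, hs.verts_eq] at ht
  refine ⟨t, ht, ?_⟩
  rw [← ht.verts_eq]
  refine six_mul_width_le hG.subcubic hvalid hbest hkite fun l hl ↦ ?_
  have hlu : l ≠ u := by
    rintro rfl
    have hleaf := ht.valid.eq_leaf_of_root_mem_leaves (ht.root_eq ▸ hl)
    refine h.ne_singleton (by simp [hG l]) ?_
    rw [← ht.verts_eq, hleaf, ht.root_eq, verts]
  rw [ht.verts_eq, Set.inter_eq_right.2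
    (h.neighborSet_subset (ht.verts_eq ▸ t.leaves_subset_verts hl) hlu), hG l]

theorem stmt_7 {V : Type} [Fintype V] (G : SimpleGraph V)
    (hconn : G.Connected) (hcubic : IsCubic G)
    (hcut : ∃ v : V, ¬ (G.induce ({v}ᶜ : Set V)).Connected) :
    (ml G : ℝ) ≤ (Fintype.card V : ℝ) / 6 + 1 / 3 := by
  classical
  have hpre := hconn.preconnected
  obtain ⟨u, hu⟩ := hcut
  obtain ⟨v, huv, hbridge⟩ := exists_isBridge_of_not_connected_induce_compl hpre (hcubic u) hu
  obtain ⟨K, hK⟩ := exists_isBridgeSide huv hbridge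
  obtain ⟨s, hs, hsw⟩ := hcubic.exists_spans_six_mul_width_le hpre hK
  obtain ⟨t, ht, htw⟩ := hcubic.exists_spans_six_mul_width_le hpre hK.compl
  have hml : ml G ≤ s.width + t.width := MotzkinTree.ml_le_width_add_width hs.valid ht.valid
    (by rw [hs.verts_eq, ht.verts_eq]; exact isCompl_compl)
    (by rw [hs.root_eq, ht.root_eq]; exact huv)
  have hcard := K.card_add_card_compl
  have hsix : 6 * ml G ≤ Fintype.card V + 2 := by omega
  have : (6 * ml G : ℝ) ≤ Fintype.card V + 2 := mod_cast hsix
  linarith
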